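/- In the setting of the previous realization theorem (exact cyclic six-term sequence G1 → G2 → G3 →0 F1 → F2 → F3 → G1 with F1, F2, F3 free, realized at the ends by row-finite matrices A ∈ M_{I×I'}(ℤ) and B ∈ M_{J×J'}(ℤ) via isomorphisms α1, β1, α3, β3): if additionally there exists a row-finite matrix A' ∈ M_{I'×I}(ℤ) such that every entry of the matrix A'A − 1 is nonnegative (where 1 denotes the identity matrix on I', and the product A'A is entrywise defined since A' is row-finite), then the row-finite matrix Y ∈ M_{J×I'}(ℤ) in the conclusion can be chosen so that all entries of Y are nonnegative. If furthermore a row-finite matrix Z ∈ M_{J×I'}(ℤ) is given, then Y can be chosen so that every entry of Y − Z is nonnegative. -/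

import Mathlib

/-- An integer matrix `D ∈ M_{S×T}(ℤ)` (a function `S × T → ℤ`) is *row-finite* if each
of its rows has only finitely many nonzero entries. -/
def RowFinite {S T : Type*} (D : S → T → ℤ) : Prop :=
  ∀ s : S, {t : T | D s t ≠ 0}.Finite

/-- The `s`-th row of a row-finite matrix, as a finitely supported vector. -/
noncomputable def rowFinsupp {S T : Type*} {D : S → T → ℤ} (hD : RowFinite D) (s : S) :
    T →₀ ℤ :=
  ⟨(hD s).toFinset, D s, fun _ => (hD s).mem_toFinset⟩

/-- The homomorphism `ℤ^(S) → ℤ^(T)`, `v ↦ v·D`, given by the right action of a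
row-finite matrix `D` on finitely supported vectors: `(v·D)(t) = Σ_s v(s)·D(s,t)`. -/
noncomputable def matHom {S T : Type*} {D : S → T → ℤ} (hD : RowFinite D) :
    (S →₀ ℤ) →ₗ[ℤ] (T →₀ ℤ) :=
  Finsupp.lsum ℤ fun s => LinearMap.toSpanSingleton ℤ (T →₀ ℤ) (rowFinsupp hD s)

/-- The block matrix `(A 0; Y B)`. -/
def blockMat {I I' J J' : Type*} (A : I → I' → ℤ) (B : J → J' → ℤ) (Y : J → I' → ℤ) :
    I ⊕ J → I' ⊕ J' → ℤ
  | Sum.inl i, Sum.inl i' => A i i'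
  | Sum.inl _, Sum.inr _ => 0
  | Sum.inr j, Sum.inl i' => Y j i'
  | Sum.inr j, Sum.inr j' => B j j'

/-- The block matrix of row-finite matrices is row-finite. -/
theorem blockMat_rowFinite {I I' J J' : Type*} {A : I → I' → ℤ} {B : J → J' → ℤ}
    {Y : J → I' → ℤ} (hA : RowFinite A) (hB : RowFinite B) (hY : RowFinite Y) :
    RowFinite (blockMat A B Y) := by
  rintro (i | j)
  · apply Set.Finite.subset ((hA i).image Sum.inl)
    rintro (i' | j') ht
    · exact ⟨i', ht, rfl⟩
    · exact absurd rfl ht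
  · apply Set.Finite.subset (((hY j).image Sum.inl).union ((hB j).image Sum.inr))
    rintro (i' | j') ht
    · exact Or.inl ⟨i', ht, rfl⟩
    · exact Or.inr ⟨j', ht, rfl⟩

/-- Projection `ℤ^(α⊔β) → ℤ^(β)` forgetting the `α`-coordinates. -/
noncomputable def projR {α β : Type*} (w : α ⊕ β →₀ ℤ) : β →₀ ℤ :=
  (Finsupp.sumFinsuppAddEquivProdFinsupp w).2

/-- `RealizesSixTerm ε γ ε' γ' δ hA hB α1 β1 α3 β3 Y hY` says: there are isomorphisms
`α2 : coker (A 0; Y B) ≃ G2` and `β2 : ker (A 0; Y B) ≃ F2` such that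
`(α1, α2, α3, β1, β2, β3)` is an isomorphism of cyclic complexes from the six-term
sequence `coker A →I coker M →P coker B →0 ker A →I' ker M →P' ker B →[Y] coker A`
(maps induced by the inclusions/projections of `ℤ^(I⊔J)` and `ℤ^(I'⊔J')`, and
`[Y] v = [v·Y]`) to the sequence `G1 →ε G2 →γ G3 →0 F1 →ε' F2 →γ' F3 →δ G1`. -/
def RealizesSixTerm {I I' J J' : Type*} {G1 G2 G3 F1 F2 F3 : Type*}
    [AddCommGroup G1] [AddCommGroup G2] [AddCommGroup G3]
    [AddCommGroup F1] [AddCommGroup F2] [AddCommGroup F3]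
    (ε : G1 →+ G2) (γ : G2 →+ G3) (ε' : F1 →+ F2) (γ' : F2 →+ F3) (δ : F3 →+ G1)
    {A : I → I' → ℤ} {B : J → J' → ℤ} (hA : RowFinite A) (hB : RowFinite B)
    (α1 : ((I' →₀ ℤ) ⧸ LinearMap.range (matHom hA)) ≃+ G1)
    (β1 : ↥(LinearMap.ker (matHom hA)) ≃+ F1)
    (α3 : ((J' →₀ ℤ) ⧸ LinearMap.range (matHom hB)) ≃+ G3)
    (β3 : ↥(LinearMap.ker (matHom hB)) ≃+ F3)
    (Y : J → I' → ℤ) (hY : RowFinite Y) : Prop :=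
  ∃ (α2 : ((I' ⊕ J' →₀ ℤ) ⧸
      LinearMap.range (matHom (blockMat_rowFinite hA hB hY))) ≃+ G2)
    (β2 : ↥(LinearMap.ker (matHom (blockMat_rowFinite hA hB hY))) ≃+ F2),
    -- the matrix-side maps are well defined:
    (∀ v : ↥(LinearMap.ker (matHom hA)),
      matHom (blockMat_rowFinite hA hB hY) (Finsupp.mapDomain Sum.inl (v : I →₀ ℤ)) = 0) ∧
    (∀ w : ↥(LinearMap.ker (matHom (blockMat_rowFinite hA hB hY))),
      matHom hB (projR (w : I ⊕ J →₀ ℤ)) = 0) ∧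
    (∀ v : I →₀ ℤ, ∃ w : I ⊕ J →₀ ℤ,
      matHom (blockMat_rowFinite hA hB hY) w = Finsupp.mapDomain Sum.inl (matHom hA v)) ∧
    (∀ w : I ⊕ J →₀ ℤ, ∃ v : J →₀ ℤ,
      matHom hB v = projR (matHom (blockMat_rowFinite hA hB hY) w)) ∧
    -- the square for `I : coker A → coker M` against `ε : G1 → G2`
    (∀ u : I' →₀ ℤ,
      α2 (Submodule.Quotient.mk (Finsupp.mapDomain Sum.inl u)) =
        ε (α1 (Submodule.Quotient.mk u))) ∧
    -- the square for `P : coker M → coker B` against `γ : G2 → G3`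
    (∀ w' : I' ⊕ J' →₀ ℤ,
      α3 (Submodule.Quotient.mk (projR w')) = γ (α2 (Submodule.Quotient.mk w'))) ∧
    -- the square for `I' : ker A → ker M` against `ε' : F1 → F2`
    (∀ (v : ↥(LinearMap.ker (matHom hA)))
        (w : ↥(LinearMap.ker (matHom (blockMat_rowFinite hA hB hY)))),
      (w : I ⊕ J →₀ ℤ) = Finsupp.mapDomain Sum.inl (v : I →₀ ℤ) →
      β2 w = ε' (β1 v)) ∧
    -- the square for `P' : ker M → ker B` against `γ' : F2 → F3`
    (∀ (w : ↥(LinearMap.ker (matHom (blockMat_rowFinite hA hB hY))))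
        (v : ↥(LinearMap.ker (matHom hB))),
      (v : J →₀ ℤ) = projR (w : I ⊕ J →₀ ℤ) →
      β3 v = γ' (β2 w)) ∧
    -- the square for `[Y] : ker B → coker A` against `δ : F3 → G1`
    (∀ v : ↥(LinearMap.ker (matHom hB)),
      α1 (Submodule.Quotient.mk (matHom hY (v : J →₀ ℤ))) = δ (β3 v))

/-!
Every subgroup of a projective abelian group is projective, because quotients of divisible groups
are injective. Lift `ℤ^(J') → coker B ≃ G₃` through `γ` to `φ : ℤ^(J') → G₂`. Since `im B` is
projective, `ker B` is a summand of `ℤ^(J)`, so `δ` extends from `ker B` to `q : ℤ^(J) → G₁` with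
`ε q = -φ B`. Any `Y` whose rows represent the values `q e_j` in `coker A ≃ G₁` works: the
cokernel of `(A 0; Y B)` is `G₂` via `(ε, φ)`, and its kernel is `F₂`, embedded by `ι₃ γ'` in
`ℤ^(J)` and by an extension of `ι₁` along `ε'` in `ℤ^(I)`, where `ι₁ : F₁ → ℤ^(I)` and
`ι₃ : F₃ → ℤ^(J)` are the inclusions of the kernels. The rows of `Y` are free up to `im A`, and for
`c ≥ 0` the element `c A' A ≥ c` of `im A` makes them as large as desired.
-/

open Function (Exact Injective Surjective)
open LinearMap (inl inr ker range snd)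

section Projective

variable {P E : Type*} [AddCommGroup P] [Module.Projective ℤ P] [AddCommGroup E] [DivisibleBy E ℤ]
  (N : Submodule ℤ P)

theorem exists_lift_of_divisibleBy {Q : Type*} [AddCommGroup Q]
    {g : E →ₗ[ℤ] Q} (hg : Surjective g) (h : N →ₗ[ℤ] Q) : ∃ l : N →ₗ[ℤ] E, g ∘ₗ l = h := by
  let _ : DivisibleBy Q ℤ := hg.divisibleBy g fun x n => map_zsmul g n x
  obtain ⟨h', extends_h⟩ :=
    (Module.Baer.of_divisible Q).extension_property N.subtype N.injective_subtype h
  obtain ⟨l, lifts_h'⟩ := Module.projective_lifting_property g h' hg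
  exact ⟨l ∘ₗ N.subtype, by rw [← LinearMap.comp_assoc, lifts_h', extends_h]⟩

-- `f⁻¹` followed by `j` is well defined into `E ⧸ j (ker f)`; a lift of it to `E` lands in `j A`.
theorem exists_section_of_injective_divisibleBy {A : Type*} [AddCommGroup A] {f : A →ₗ[ℤ] N}
    (hf : Surjective f) {j : A →ₗ[ℤ] E} (hj : Injective j) :
    ∃ s : N →ₗ[ℤ] A, f ∘ₗ s = LinearMap.id := by
  let K : Submodule ℤ E := (ker f).map j
  let f' : N →ₗ[ℤ] E ⧸ K :=
    (ker f).mapQ K j (Submodule.le_comap_map _ _) ∘ₗ (f.quotKerEquivOfSurjective hf).symm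
  have f'_apply (a : A) : f' (f a) = K.mkQ (j a) := by
    have : (f.quotKerEquivOfSurjective hf).symm (f a) = Submodule.Quotient.mk a :=
      (LinearEquiv.symm_apply_eq _).2 rfl
    simp only [f', LinearMap.comp_apply, LinearEquiv.coe_coe, this, Submodule.mapQ_apply,
      Submodule.mkQ_apply]
  obtain ⟨l, hl⟩ := exists_lift_of_divisibleBy N K.mkQ_surjective f'
  have mem_range (n : N) : ∃ a, j a = l n ∧ f a = n := by
    obtain ⟨a, rfl⟩ := hf n
    have : l (f a) - j a ∈ K := by
      rw [← K.ker_mkQ, LinearMap.mem_ker, map_sub, ← f'_apply, ← hl, LinearMap.comp_apply, sub_self]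
    obtain ⟨k, hk, hkl⟩ := this
    exact ⟨a + k, by rw [map_add, hkl, add_sub_cancel], by rw [map_add, hk, add_zero]⟩
  let l' : N →ₗ[ℤ] range j := l.codRestrict _ fun n => (mem_range n).imp fun _ ha => ha.1
  refine ⟨(LinearEquiv.ofInjective j hj).symm ∘ₗ l', LinearMap.ext fun n => ?_⟩
  obtain ⟨a, ha, rfl⟩ := mem_range n
  have : l' (f a) = LinearEquiv.ofInjective j hj a := Subtype.ext ha.symm
  simp [this]

theorem projective_int_submodule : Module.Projective ℤ N := by
  refine .of_lifting_property'' fun f hf => ?_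
  let j : (N →₀ ℤ) →ₗ[ℤ] (N →₀ ℚ) := Finsupp.mapRange.linearMap (Int.castAddHom ℚ).toIntLinearMap
  have hj : Injective j := Finsupp.mapRange_injective _ (map_zero _) Int.cast_injective
  let _ : DivisibleBy (N →₀ ℚ) ℤ := divisibleByOfSMulRightSurj _ _ fun {n} hn x =>
    ⟨(n : ℚ)⁻¹ • x, by
      have : (n : ℚ) ≠ 0 := Int.cast_ne_zero.2 hn
      simp [← Int.cast_smul_eq_zsmul ℚ, smul_smul, this]⟩
  exact exists_section_of_injective_divisibleBy N hf hj

end Projective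

section Block

variable {R : Type*} [Ring R]
  {M M' N N' : Type*} [AddCommGroup M] [AddCommGroup M'] [AddCommGroup N] [AddCommGroup N']
  [Module R M] [Module R M'] [Module R N] [Module R N']
  {G₁ G₂ G₃ F₁ F₂ F₃ : Type*} [AddCommGroup G₁] [AddCommGroup G₂] [AddCommGroup G₃]
  [AddCommGroup F₁] [AddCommGroup F₂] [AddCommGroup F₃]
  [Module R G₁] [Module R G₂] [Module R G₃] [Module R F₁] [Module R F₂] [Module R F₃]

theorem exists_extension_lift {X Y K P C : Type*} [AddCommGroup X] [AddCommGroup Y]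
    [AddCommGroup K] [AddCommGroup P] [AddCommGroup C] [Module R X] [Module R Y] [Module R K]
    [Module R P] [Module R C] {i : K →ₗ[R] P} {g : P →ₗ[R] C} [Module.Projective R (range g)]
    (hi : Injective i) (hig : Exact i g) {e : X →ₗ[R] Y} {ψ : P →ₗ[R] Y} (hψ : range ψ ≤ range e)
    {d : K →ₗ[R] X} (hd : e ∘ₗ d = ψ ∘ₗ i) :
    ∃ q : P →ₗ[R] X, e ∘ₗ q = ψ ∧ q ∘ₗ i = d := by
  have hig' : Exact i g.rangeRestrict := by
    rw [LinearMap.exact_iff, LinearMap.ker_rangeRestrict, hig.linearMap_ker_eq]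
  obtain ⟨s, hs⟩ := g.rangeRestrict.exists_rightInverse_of_surjective g.range_rangeRestrict
  obtain ⟨E, hEi, -⟩ := hig'.splitSurjectiveEquiv hi ⟨s, hs⟩
  let ψ' : range g →ₗ[R] range e :=
    (ψ ∘ₗ E.symm.toLinearMap ∘ₗ inr R K (range g)).codRestrict _ fun _ => hψ ⟨_, rfl⟩
  obtain ⟨h, hh⟩ := Module.projective_lifting_property e.rangeRestrict ψ' e.surjective_rangeRestrict
  have heh (x : range g) : e (h x) = ψ (E.symm (0, x)) :=
    congrArg Subtype.val (LinearMap.congr_fun hh x)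
  have hed (x : K) : e (d x) = ψ (E.symm (x, 0)) := by
    simpa [hEi] using LinearMap.congr_fun hd x
  refine ⟨d.coprod h ∘ₗ E, LinearMap.ext fun x => ?_, LinearMap.ext fun x => ?_⟩
  · obtain ⟨⟨u, v⟩, rfl⟩ := E.symm.surjective x
    suffices e (d u + h v) = ψ (E.symm (u, v)) by simpa
    rw [map_add, hed, heh, ← map_add, ← map_add, Prod.mk_add_mk, add_zero, zero_add]
  · simp [hEi]

/-- The linear map of the block matrix `(a 0; y b)` acting on row vectors: the coordinate-free
counterpart of `blockMat`, on a product instead of functions on a disjoint union. -/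
def blockMap (a : M →ₗ[R] M') (b : N →ₗ[R] N') (y : N →ₗ[R] M') : M × N →ₗ[R] M' × N' :=
  (a.coprod y).prod (b ∘ₗ snd R M N)

@[simp]
theorem blockMap_apply (a : M →ₗ[R] M') (b : N →ₗ[R] N') (y : N →ₗ[R] M') (w : M × N) :
    blockMap a b y w = (a w.1 + y w.2, b w.2) :=
  rfl

variable {a : M →ₗ[R] M'} {b : N →ₗ[R] N'} {y : N →ₗ[R] M'}
  {p₁ : M' →ₗ[R] G₁} {p₃ : N' →ₗ[R] G₃} {ι₁ : F₁ →ₗ[R] M} {ι₃ : F₃ →ₗ[R] N}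
  {ε : G₁ →ₗ[R] G₂} {γ : G₂ →ₗ[R] G₃} {ε' : F₁ →ₗ[R] F₂} {γ' : F₂ →ₗ[R] F₃} {δ : F₃ →ₗ[R] G₁}

-- The minus sign makes `(ε ∘ p₁, φ)` vanish on the rows `(y n, b n)` as soon as `p₁ ∘ y = q`.
theorem exists_connecting_lift [Module.Projective R N'] [Module.Projective R (range b)]
    (hγ : Surjective γ) (hεγ : Exact ε γ) (hδε : Exact δ ε) (hbp : Exact b p₃)
    (hι₃ : Injective ι₃) (hιb : Exact ι₃ b) :
    ∃ (φ : N' →ₗ[R] G₂) (q : N →ₗ[R] G₁), γ ∘ₗ φ = p₃ ∧ ε ∘ₗ q = -(φ ∘ₗ b) ∧ q ∘ₗ ι₃ = δ := by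
  obtain ⟨φ, hφ⟩ := Module.projective_lifting_property γ p₃ hγ
  have range_le : range (-(φ ∘ₗ b)) ≤ range ε := by
    rw [← hεγ.linearMap_ker_eq, LinearMap.range_le_ker_iff, LinearMap.comp_neg,
      ← LinearMap.comp_assoc, hφ, hbp.linearMap_comp_eq_zero, neg_zero]
  have compat : ε ∘ₗ δ = (-(φ ∘ₗ b)) ∘ₗ ι₃ := by
    rw [hδε.linearMap_comp_eq_zero, LinearMap.neg_comp, LinearMap.comp_assoc,
      hιb.linearMap_comp_eq_zero, LinearMap.comp_zero, neg_zero]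
  obtain ⟨q, hεq, hqι⟩ := exists_extension_lift hι₃ hιb range_le compat
  exact ⟨φ, q, hφ, hεq, hqι⟩

theorem surjective_coprod_of_lift {φ : N' →ₗ[R] G₂} (hp₁ : Surjective p₁) (hp₃ : Surjective p₃)
    (hεγ : Exact ε γ) (hφ : γ ∘ₗ φ = p₃) : Surjective ((ε ∘ₗ p₁).coprod φ) := by
  intro g
  obtain ⟨n, hn⟩ := hp₃ (γ g)
  have : γ (g - φ n) = 0 := by rw [map_sub, ← LinearMap.comp_apply γ, hφ, hn, sub_self]
  obtain ⟨t, ht⟩ := (hεγ _).1 this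
  obtain ⟨m, rfl⟩ := hp₁ t
  exact ⟨(m, n), by simp [ht]⟩

theorem exact_blockMap_coprod {φ : N' →ₗ[R] G₂} (hap : Exact a p₁) (hbp : Exact b p₃)
    (hιb : Exact ι₃ b) (hεγ : Exact ε γ) (hδε : Exact δ ε) (hφ : γ ∘ₗ φ = p₃)
    (hy : ε ∘ₗ p₁ ∘ₗ y = -(φ ∘ₗ b)) (hyι : p₁ ∘ₗ y ∘ₗ ι₃ = δ) :
    Exact (blockMap a b y) ((ε ∘ₗ p₁).coprod φ) := by
  have εy (n : N) : ε (p₁ (y n)) = -φ (b n) := LinearMap.congr_fun hy n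
  have p₁yι (t : F₃) : p₁ (y (ι₃ t)) = δ t := LinearMap.congr_fun hyι t
  have γφ (n : N') : γ (φ n) = p₃ n := LinearMap.congr_fun hφ n
  rintro ⟨m', n'⟩
  constructor
  · intro hw
    rw [LinearMap.coprod_apply, LinearMap.comp_apply] at hw
    have p₃n' : p₃ n' = 0 := by simpa [hεγ.apply_apply_eq_zero, γφ] using congrArg γ hw
    obtain ⟨n, rfl⟩ := (hbp n').1 p₃n'
    have : ε (p₁ (m' - y n)) = 0 := by rw [map_sub, map_sub, εy, sub_neg_eq_add, hw]
    obtain ⟨t, ht⟩ := (hδε _).1 this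
    have : p₁ (m' - y (n + ι₃ t)) = 0 := by
      rw [map_add, ← sub_sub, map_sub, p₁yι, ht, sub_self]
    obtain ⟨m, hm⟩ := (hap _).1 this
    exact ⟨(m, n + ι₃ t), by simp [hm, hιb.apply_apply_eq_zero]⟩
  · rintro ⟨⟨m, n⟩, h⟩
    rw [← h]
    simp [hap.apply_apply_eq_zero, εy]

theorem injective_prod_of_exact {K₁ K₂ : Type*} [AddCommGroup K₁] [AddCommGroup K₂]
    [Module R K₁] [Module R K₂] {i : K₁ →ₗ[R] K₂} {f : K₂ →ₗ[R] M} {g : K₂ →ₗ[R] N}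
    (hig : Exact i g) (hfi : Injective (f ∘ₗ i)) : Injective (f.prod g) := by
  rw [injective_iff_map_eq_zero]
  intro x hx
  obtain ⟨hfx, hgx⟩ := Prod.mk.inj hx
  obtain ⟨t, rfl⟩ := (hig x).1 hgx
  rw [(map_eq_zero_iff (f ∘ₗ i) hfi).1 hfx, map_zero]

theorem exact_prod_blockMap {f : F₂ →ₗ[R] M} (hιa : Exact ι₁ a) (hap : Exact a p₁)
    (hιb : Exact ι₃ b) (hεγ' : Exact ε' γ') (hγδ : Exact γ' δ) (hyι : p₁ ∘ₗ y ∘ₗ ι₃ = δ)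
    (haf : a ∘ₗ f = -(y ∘ₗ ι₃ ∘ₗ γ')) (hfε : f ∘ₗ ε' = ι₁) :
    Exact (f.prod (ι₃ ∘ₗ γ')) (blockMap a b y) := by
  have af (x : F₂) : a (f x) = -y (ι₃ (γ' x)) := LinearMap.congr_fun haf x
  have fε (x : F₁) : f (ε' x) = ι₁ x := LinearMap.congr_fun hfε x
  have p₁yι (t : F₃) : p₁ (y (ι₃ t)) = δ t := LinearMap.congr_fun hyι t
  rintro ⟨m, n⟩
  constructor
  · intro hmn
    obtain ⟨ham, hbn⟩ := Prod.mk.inj hmn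
    obtain ⟨t, rfl⟩ := (hιb n).1 hbn
    have am : a m = -y (ι₃ t) := eq_neg_of_add_eq_zero_left ham
    have δt : δ t = 0 := by
      rw [← p₁yι, ← neg_eq_zero, ← map_neg, ← am, hap.apply_apply_eq_zero]
    obtain ⟨x, rfl⟩ := (hγδ t).1 δt
    have : a (m - f x) = 0 := by rw [map_sub, am, af, sub_self]
    obtain ⟨s, hs⟩ := (hιa _).1 this
    exact ⟨x + ε' s, by simp [fε, hs, hεγ'.apply_apply_eq_zero]⟩
  · rintro ⟨x, h⟩
    rw [← h]
    simp [af, hιb.apply_apply_eq_zero]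

theorem exists_injective_exact_blockMap [Module.Projective R (range (ι₃ ∘ₗ γ'))]
    (hι₁ : Injective ι₁) (hιa : Exact ι₁ a) (hap : Exact a p₁) (hι₃ : Injective ι₃)
    (hιb : Exact ι₃ b) (hε' : Injective ε') (hεγ' : Exact ε' γ') (hγδ : Exact γ' δ)
    (hyι : p₁ ∘ₗ y ∘ₗ ι₃ = δ) :
    ∃ ι₂ : F₂ →ₗ[R] M × N, Injective ι₂ ∧ Exact ι₂ (blockMap a b y) ∧
      ι₂ ∘ₗ ε' = inl R M N ∘ₗ ι₁ ∧ snd R M N ∘ₗ ι₂ = ι₃ ∘ₗ γ' := by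
  have range_le : range (-(y ∘ₗ ι₃ ∘ₗ γ')) ≤ range a := by
    have : p₁ ∘ₗ y ∘ₗ ι₃ ∘ₗ γ' = 0 := by rw [← hγδ.linearMap_comp_eq_zero, ← hyι]; rfl
    rw [← hap.linearMap_ker_eq, LinearMap.range_le_ker_iff, LinearMap.comp_neg, this, neg_zero]
  have compat : a ∘ₗ ι₁ = (-(y ∘ₗ ι₃ ∘ₗ γ')) ∘ₗ ε' := by
    rw [hιa.linearMap_comp_eq_zero, LinearMap.neg_comp, LinearMap.comp_assoc, LinearMap.comp_assoc,
      hεγ'.linearMap_comp_eq_zero, LinearMap.comp_zero, LinearMap.comp_zero, neg_zero]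
  have hεγι : Exact ε' (ι₃ ∘ₗ γ') := hεγ'.comp_injective ι₃ hι₃ (map_zero ι₃)
  obtain ⟨f, haf, hfε⟩ := exists_extension_lift hε' hεγι range_le compat
  refine ⟨f.prod (ι₃ ∘ₗ γ'), injective_prod_of_exact hεγι (hfε ▸ hι₁),
    exact_prod_blockMap hιa hap hιb hεγ' hγδ hyι haf hfε, ?_, LinearMap.snd_prod _ _⟩
  rw [LinearMap.prod_comp, hfε, hεγι.linearMap_comp_eq_zero]
  rfl

end Block

section Matrix

variable {I I' J J' : Type*} {A : I → I' → ℤ} {B : J → J' → ℤ} {Y : J → I' → ℤ}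

theorem matHom_single_one {S T : Type*} {D : S → T → ℤ} (hD : RowFinite D) (s : S) :
    matHom hD (Finsupp.single s 1) = rowFinsupp hD s := by
  simp [matHom]

theorem matHom_rowFinsupp_apply {S T U : Type*} {C : S → T → ℤ} {D : T → U → ℤ}
    (hC : RowFinite C) (hD : RowFinite D) (s : S) (u : U) :
    matHom hD (rowFinsupp hC s) u = ∑ t ∈ (hC s).toFinset, C s t * D t u := by
  simp only [matHom, Finsupp.lsum_apply, Finsupp.sum, Finsupp.finsetSum_apply]
  rfl

theorem le_matHom_matHom_of_nonneg (hA : RowFinite A) {A' : I' → I → ℤ} (hA' : RowFinite A')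
    (hpos : ∀ a, Finsupp.single a 1 ≤ matHom hA (rowFinsupp hA' a)) {c : I' →₀ ℤ} (hc : 0 ≤ c) :
    c ≤ matHom hA (matHom hA' c) :=
  calc
    c = ∑ a ∈ c.support, c a • Finsupp.single a 1 := by
      simpa [Finsupp.sum] using c.sum_single.symm
    _ ≤ ∑ a ∈ c.support, c a • matHom hA (rowFinsupp hA' a) :=
      Finset.sum_le_sum fun a _ => smul_le_smul_of_nonneg_left (hpos a) (hc a)
    _ = matHom hA (matHom hA' c) := by
      simp [matHom, Finsupp.sum]

theorem exists_le_add_matHom (hA : RowFinite A) {A' : I' → I → ℤ} (hA' : RowFinite A')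
    (hpos : ∀ a, Finsupp.single a 1 ≤ matHom hA (rowFinsupp hA' a)) (u z : I' →₀ ℤ) :
    ∃ v, z ≤ u + matHom hA v := by
  refine ⟨matHom hA' (z - u)⁺, ?_⟩
  have := (le_posPart (z - u)).trans (le_matHom_matHom_of_nonneg hA hA' hpos (posPart_nonneg _))
  rwa [sub_le_iff_le_add'] at this

theorem exists_rowFinite_ge_comp_matHom_eq {X : Type*} [AddCommGroup X] (hA : RowFinite A)
    {A' : I' → I → ℤ} (hA' : RowFinite A')
    (hpos : ∀ a, Finsupp.single a 1 ≤ matHom hA (rowFinsupp hA' a)) {p : (I' →₀ ℤ) →ₗ[ℤ] X}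
    (hp : Surjective p) (hAp : p ∘ₗ matHom hA = 0) (q : (J →₀ ℤ) →ₗ[ℤ] X) {Z : J → I' → ℤ}
    (hZ : RowFinite Z) :
    ∃ (Y : J → I' → ℤ) (hY : RowFinite Y), (∀ j i', Z j i' ≤ Y j i') ∧ p ∘ₗ matHom hY = q := by
  have rows (j : J) : ∃ r : I' →₀ ℤ, rowFinsupp hZ j ≤ r ∧ p r = q (Finsupp.single j 1) := by
    obtain ⟨u, hu⟩ := hp (q (Finsupp.single j 1))
    obtain ⟨v, hv⟩ := exists_le_add_matHom hA hA' hpos u (rowFinsupp hZ j)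
    refine ⟨_, hv, ?_⟩
    rw [map_add, hu, ← LinearMap.comp_apply p, hAp, LinearMap.zero_apply, add_zero]
  choose r hZr hpr using rows
  have hY : RowFinite fun j i' => r j i' := fun j => (r j).hasFiniteSupport
  refine ⟨_, hY, hZr, Finsupp.lhom_ext' fun j => LinearMap.ext_ring ?_⟩
  have : rowFinsupp hY j = r j := Finsupp.ext fun _ => rfl
  simp [matHom_single_one, this, hpr]

theorem sumFinsuppLEquivProdFinsupp_mapDomain_inl {α β : Type*} (u : α →₀ ℤ) :
    Finsupp.sumFinsuppLEquivProdFinsupp (β := β) ℤ (u.mapDomain Sum.inl) = (u, 0) := by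
  ext x
  · exact Finsupp.mapDomain_apply Sum.inl_injective u x
  · exact Finsupp.mapDomain_of_notMem_range u _ (by simp)

theorem sumFinsuppLEquivProdFinsupp_mapDomain_inr {α β : Type*} (u : β →₀ ℤ) :
    Finsupp.sumFinsuppLEquivProdFinsupp (α := α) ℤ (u.mapDomain Sum.inr) = (0, u) := by
  ext x
  · exact Finsupp.mapDomain_of_notMem_range u _ (by simp)
  · exact Finsupp.mapDomain_apply Sum.inr_injective u x

theorem sumFinsuppLEquivProdFinsupp_matHom_blockMat (hA : RowFinite A) (hB : RowFinite B)
    (hY : RowFinite Y) (w : I ⊕ J →₀ ℤ) :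
    Finsupp.sumFinsuppLEquivProdFinsupp ℤ (matHom (blockMat_rowFinite hA hB hY) w) =
      blockMap (matHom hA) (matHom hB) (matHom hY) (Finsupp.sumFinsuppLEquivProdFinsupp ℤ w) := by
  suffices (Finsupp.sumFinsuppLEquivProdFinsupp ℤ).toLinearMap ∘ₗ
      matHom (blockMat_rowFinite hA hB hY) = blockMap (matHom hA) (matHom hB) (matHom hY) ∘ₗ
      (Finsupp.sumFinsuppLEquivProdFinsupp ℤ).toLinearMap from LinearMap.congr_fun this w
  refine Finsupp.lhom_ext' fun k => LinearMap.ext_ring ?_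
  simp only [LinearMap.comp_apply, LinearEquiv.coe_coe, Finsupp.lsingle_apply, matHom_single_one]
  rcases k with i | j
  · rw [← Finsupp.mapDomain_single, sumFinsuppLEquivProdFinsupp_mapDomain_inl, blockMap_apply]
    simp only [matHom_single_one, map_zero, add_zero]
    ext <;> rfl
  · rw [← Finsupp.mapDomain_single, sumFinsuppLEquivProdFinsupp_mapDomain_inr, blockMap_apply]
    simp only [matHom_single_one, map_zero, zero_add]
    ext <;> rfl

theorem matHom_blockMat_mapDomain_inl (hA : RowFinite A) (hB : RowFinite B) (hY : RowFinite Y)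
    (v : I →₀ ℤ) :
    matHom (blockMat_rowFinite hA hB hY) (v.mapDomain Sum.inl) =
      (matHom hA v).mapDomain Sum.inl := by
  apply (Finsupp.sumFinsuppLEquivProdFinsupp ℤ).injective
  rw [sumFinsuppLEquivProdFinsupp_matHom_blockMat hA hB hY,
    sumFinsuppLEquivProdFinsupp_mapDomain_inl, sumFinsuppLEquivProdFinsupp_mapDomain_inl,
    blockMap_apply, map_zero, map_zero, add_zero]

theorem projR_matHom_blockMat (hA : RowFinite A) (hB : RowFinite B) (hY : RowFinite Y)
    (w : I ⊕ J →₀ ℤ) :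
    projR (matHom (blockMat_rowFinite hA hB hY) w) = matHom hB (projR w) :=
  congrArg Prod.snd (sumFinsuppLEquivProdFinsupp_matHom_blockMat hA hB hY w)

theorem exact_matHom_blockMat_comp {X : Type*} [AddCommGroup X] (hA : RowFinite A)
    (hB : RowFinite B) (hY : RowFinite Y) {p : (I' →₀ ℤ) × (J' →₀ ℤ) →ₗ[ℤ] X}
    (hp : Exact (blockMap (matHom hA) (matHom hB) (matHom hY)) p) :
    Exact (matHom (blockMat_rowFinite hA hB hY))
      (p ∘ₗ (Finsupp.sumFinsuppLEquivProdFinsupp ℤ).toLinearMap) := fun w => by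
  refine (hp _).trans ((Finsupp.sumFinsuppLEquivProdFinsupp ℤ).surjective.exists.trans
    (exists_congr fun v => ?_))
  rw [← sumFinsuppLEquivProdFinsupp_matHom_blockMat]
  exact EmbeddingLike.apply_eq_iff_eq _

theorem exact_comp_matHom_blockMat {X : Type*} [AddCommGroup X] (hA : RowFinite A)
    (hB : RowFinite B) (hY : RowFinite Y) {ι : X →ₗ[ℤ] (I →₀ ℤ) × (J →₀ ℤ)}
    (hι : Exact ι (blockMap (matHom hA) (matHom hB) (matHom hY))) :
    Exact ((Finsupp.sumFinsuppLEquivProdFinsupp ℤ).symm.toLinearMap ∘ₗ ι)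
      (matHom (blockMat_rowFinite hA hB hY)) := fun w => by
  rw [← (Finsupp.sumFinsuppLEquivProdFinsupp ℤ).map_eq_zero_iff,
    sumFinsuppLEquivProdFinsupp_matHom_blockMat hA hB hY, hι]
  exact exists_congr fun x => (LinearEquiv.symm_apply_eq _).symm

end Matrix

section Identification

variable {M N G F : Type*} [AddCommGroup M] [AddCommGroup N] [AddCommGroup G] [AddCommGroup F]
  {f : M →ₗ[ℤ] N}

/-- The projection `N → coker f ≃ G` onto a group identified with the cokernel of `f`. -/
def cokerProj (α : (N ⧸ range f) ≃+ G) : N →ₗ[ℤ] G :=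
  α.toIntLinearEquiv.toLinearMap ∘ₗ (range f).mkQ

@[simp]
theorem cokerProj_apply (α : (N ⧸ range f) ≃+ G) (x : N) :
    cokerProj α x = α (Submodule.Quotient.mk x) :=
  rfl

theorem cokerProj_surjective (α : (N ⧸ range f) ≃+ G) : Surjective (cokerProj α) :=
  α.surjective.comp (range f).mkQ_surjective

theorem exact_cokerProj (α : (N ⧸ range f) ≃+ G) : Exact f (cokerProj α) :=
  LinearEquiv.postcomp_exact_iff_exact.2 f.exact_map_mkQ_range

/-- The inclusion `F ≃ ker f → M` of a group identified with the kernel of `f`. -/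
def kerIncl (β : ker f ≃+ F) : F →ₗ[ℤ] M :=
  (ker f).subtype ∘ₗ β.symm.toIntLinearEquiv.toLinearMap

@[simp]
theorem kerIncl_apply (β : ker f ≃+ F) (x : F) : kerIncl β x = β.symm x :=
  rfl

theorem kerIncl_injective (β : ker f ≃+ F) : Injective (kerIncl β) :=
  Subtype.val_injective.comp β.symm.injective

theorem exact_kerIncl (β : ker f ≃+ F) : Exact (kerIncl β) f :=
  LinearEquiv.precomp_exact_iff_exact.2 f.exact_subtype_ker_map

end Identification

section Realization

variable {I I' J J' : Type*} {A : I → I' → ℤ} {B : J → J' → ℤ} {G1 G2 G3 F1 F2 F3 : Type*}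
  [AddCommGroup G1] [AddCommGroup G2] [AddCommGroup G3]
  [AddCommGroup F1] [AddCommGroup F2] [AddCommGroup F3]
  {ε : G1 →+ G2} {γ : G2 →+ G3} {ε' : F1 →+ F2} {γ' : F2 →+ F3} {δ : F3 →+ G1}
  (hA : RowFinite A) (hB : RowFinite B)
  (α1 : ((I' →₀ ℤ) ⧸ range (matHom hA)) ≃+ G1) (β1 : ker (matHom hA) ≃+ F1)
  (α3 : ((J' →₀ ℤ) ⧸ range (matHom hB)) ≃+ G3) (β3 : ker (matHom hB) ≃+ F3)

theorem realizesSixTerm_of_exact_blockMap {Y : J → I' → ℤ} (hY : RowFinite Y)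
    {p₂ : (I' →₀ ℤ) × (J' →₀ ℤ) →ₗ[ℤ] G2} (hp₂ : Surjective p₂)
    (hMp₂ : Exact (blockMap (matHom hA) (matHom hB) (matHom hY)) p₂)
    {ι₂ : F2 →ₗ[ℤ] (I →₀ ℤ) × (J →₀ ℤ)} (hι₂ : Injective ι₂)
    (hι₂M : Exact ι₂ (blockMap (matHom hA) (matHom hB) (matHom hY)))
    (hp₂ε : ∀ u, p₂ (u, 0) = ε (α1 (Submodule.Quotient.mk u)))
    (hγp₂ : ∀ w, γ (p₂ w) = α3 (Submodule.Quotient.mk w.2))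
    (hι₂ε : ∀ v, ι₂ (ε' (β1 v)) = (↑v, 0)) (hγι₂ : ∀ x, (ι₂ x).2 = β3.symm (γ' x))
    (hδ : ∀ v : ker (matHom hB), α1 (Submodule.Quotient.mk (matHom hY v)) = δ (β3 v)) :
    RealizesSixTerm ε γ ε' γ' δ hA hB α1 β1 α3 β3 Y hY := by
  let M := matHom (blockMat_rowFinite hA hB hY)
  let split := Finsupp.sumFinsuppLEquivProdFinsupp (α := I) (β := J) (M := ℤ) ℤ
  let split' := Finsupp.sumFinsuppLEquivProdFinsupp (α := I') (β := J') (M := ℤ) ℤ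
  let α2 : ((I' ⊕ J' →₀ ℤ) ⧸ range M) ≃ₗ[ℤ] G2 :=
    (exact_matHom_blockMat_comp hA hB hY hMp₂).linearEquivOfSurjective (hp₂.comp split'.surjective)
  let ι : F2 →ₗ[ℤ] I ⊕ J →₀ ℤ := split.symm.toLinearMap ∘ₗ ι₂
  have range_ι : range ι = ker M :=
    (exact_comp_matHom_blockMat hA hB hY hι₂M).linearMap_ker_eq.symm
  let β2 : ker M ≃ₗ[ℤ] F2 :=
    ((LinearEquiv.ofInjective ι (split.symm.injective.comp hι₂)).trans (.ofEq _ _ range_ι)).symm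
  have ι₂β2 (w : ker M) : ι₂ (β2 w) = split w := by
    obtain ⟨x, rfl⟩ := β2.symm.surjective w
    rw [β2.apply_symm_apply]
    exact (split.apply_symm_apply (ι₂ x)).symm
  refine ⟨α2.toAddEquiv, β2.toAddEquiv, fun v => ?_, fun w => ?_,
    fun v => ⟨_, matHom_blockMat_mapDomain_inl hA hB hY v⟩,
    fun w => ⟨_, (projR_matHom_blockMat hA hB hY w).symm⟩,
    fun u => ?_, fun w => (hγp₂ (split' w)).symm, fun v w hvw => ?_, fun w v hvw => ?_, hδ⟩
  · rw [matHom_blockMat_mapDomain_inl hA hB hY, v.2, Finsupp.mapDomain_zero]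
  · rw [← projR_matHom_blockMat hA hB hY, w.2, projR, map_zero, Prod.snd_zero]
  · exact (congrArg p₂ (sumFinsuppLEquivProdFinsupp_mapDomain_inl u)).trans (hp₂ε u)
  · refine hι₂ ((ι₂β2 w).trans ?_)
    rw [hι₂ε, hvw]
    exact sumFinsuppLEquivProdFinsupp_mapDomain_inl _
  · rw [← β3.eq_symm_apply]
    refine Subtype.ext (hvw.trans ?_)
    exact (congrArg Prod.snd (ι₂β2 w)).symm.trans (hγι₂ _)

theorem realizesSixTerm_of_connecting_lift
    (hε' : Injective ε') (hεγ : Exact ε γ) (hεγ' : Exact ε' γ') (hγδ : Exact γ' δ)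
    (hδε : Exact δ ε) {φ : (J' →₀ ℤ) →ₗ[ℤ] G2} (hφ : γ.toIntLinearMap ∘ₗ φ = cokerProj α3)
    {q : (J →₀ ℤ) →ₗ[ℤ] G1} (hεq : ε.toIntLinearMap ∘ₗ q = -(φ ∘ₗ matHom hB))
    (hqδ : q ∘ₗ kerIncl β3 = δ.toIntLinearMap)
    {Y : J → I' → ℤ} (hY : RowFinite Y) (hYq : cokerProj α1 ∘ₗ matHom hY = q) :
    RealizesSixTerm ε γ ε' γ' δ hA hB α1 β1 α3 β3 Y hY := by
  have hYδ : cokerProj α1 ∘ₗ matHom hY ∘ₗ kerIncl β3 = δ.toIntLinearMap := by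
    rw [← LinearMap.comp_assoc, hYq, hqδ]
  have := projective_int_submodule (range (kerIncl β3 ∘ₗ γ'.toIntLinearMap))
  obtain ⟨ι₂, hι₂, hι₂M, hι₂ε, hγι₂⟩ := exists_injective_exact_blockMap (ε' := ε'.toIntLinearMap)
    (γ' := γ'.toIntLinearMap) (δ := δ.toIntLinearMap) (kerIncl_injective β1) (exact_kerIncl β1)
    (exact_cokerProj α1) (kerIncl_injective β3) (exact_kerIncl β3) hε' hεγ' hγδ hYδ
  have hMp₂ := exact_blockMap_coprod (ε := ε.toIntLinearMap) (γ := γ.toIntLinearMap)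
    (δ := δ.toIntLinearMap) (exact_cokerProj α1) (exact_cokerProj α3) (exact_kerIncl β3) hεγ hδε hφ
    (hYq ▸ hεq) hYδ
  have hp₂ := surjective_coprod_of_lift (ε := ε.toIntLinearMap) (γ := γ.toIntLinearMap)
    (cokerProj_surjective α1) (cokerProj_surjective α3) hεγ hφ
  refine realizesSixTerm_of_exact_blockMap hA hB α1 β1 α3 β3 hY hp₂ hMp₂ hι₂ hι₂M
    (fun u => by simp) (fun w => ?_) (fun v => ?_) (LinearMap.congr_fun hγι₂) (fun v => ?_)
  · have γε (x : G1) : γ (ε x) = 0 := hεγ.apply_apply_eq_zero x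
    simpa [γε] using LinearMap.congr_fun hφ w.2
  · simpa using LinearMap.congr_fun hι₂ε (β1 v)
  · simpa using LinearMap.congr_fun hYδ (β3 v)

open scoped Classical in
theorem six_term_realization_nonneg_general
    (hexG2 : Exact ε γ)
    (hexG3 : Exact γ (fun _ : G3 => (0 : F1)))
    (hexF1 : Exact (fun _ : G3 => (0 : F1)) ε')
    (hexF2 : Exact ε' γ')
    (hexF3 : Exact γ' δ)
    (hexG1 : Exact δ ε)
    {A' : I' → I → ℤ} (hA' : RowFinite A')
    (hpos : ∀ a b : I',
      0 ≤ (∑ i ∈ (hA' a).toFinset, A' a i * A i b) - (if a = b then 1 else 0))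
    {Z : J → I' → ℤ} (hZ : RowFinite Z) :
    ∃ (Y : J → I' → ℤ) (hY : RowFinite Y), (∀ j i', Z j i' ≤ Y j i') ∧
      RealizesSixTerm ε γ ε' γ' δ hA hB α1 β1 α3 β3 Y hY := by
  have hγ : Surjective γ := fun x => (hexG3 x).1 rfl
  have hε' : Injective ε' := (injective_iff_map_eq_zero ε').2 fun x hx => by
    obtain ⟨_, zero_eq⟩ := (hexF1 x).1 hx
    exact zero_eq.symm
  have single_le (a : I') : Finsupp.single a 1 ≤ matHom hA (rowFinsupp hA' a) := fun b => by
    simpa [matHom_rowFinsupp_apply, Finsupp.single_apply] using hpos a b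
  have := projective_int_submodule (range (matHom hB))
  obtain ⟨φ, q, hφ, hεq, hqδ⟩ := exists_connecting_lift (γ := γ.toIntLinearMap)
    (ε := ε.toIntLinearMap) (δ := δ.toIntLinearMap) hγ hexG2 hexG1 (exact_cokerProj α3)
    (kerIncl_injective β3) (exact_kerIncl β3)
  obtain ⟨Y, hY, hZY, hYq⟩ := exists_rowFinite_ge_comp_matHom_eq hA hA' single_le
    (cokerProj_surjective α1) (exact_cokerProj α1).linearMap_comp_eq_zero q hZ
  exact ⟨Y, hY, hZY, realizesSixTerm_of_connecting_lift hA hB α1 β1 α3 β3 hε' hexG2 hexF2 hexF3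
    hexG1 hφ hεq hqδ hY hYq⟩

end Realization

open scoped Classical in
/-- In the setting of the six-term realization theorem (exact cyclic
sequence `G1 → G2 → G3 →0 F1 → F2 → F3 → G1` with `F1, F2, F3` free, realized at the
ends by row-finite matrices `A ∈ M_{I×I'}(ℤ)`, `B ∈ M_{J×J'}(ℤ)` via `α1, β1, α3, β3`):
if there is a row-finite `A' ∈ M_{I'×I}(ℤ)` such that every entry of `A'A − 1` is
nonnegative (the product being entrywise defined since `A'` is row-finite), then the
realizing matrix `Y ∈ M_{J×I'}(ℤ)` can be chosen with all entries nonnegative; and if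
furthermore a row-finite `Z ∈ M_{J×I'}(ℤ)` is given, `Y` can be chosen with all
entries of `Y − Z` nonnegative. -/
theorem six_term_realization_nonneg {I I' J J' : Type*}
    [Countable I] [Countable I'] [Countable J] [Countable J']
    [Nonempty I] [Nonempty I'] [Nonempty J] [Nonempty J']
    {G1 G2 G3 F1 F2 F3 : Type*}
    [AddCommGroup G1] [AddCommGroup G2] [AddCommGroup G3]
    [AddCommGroup F1] [AddCommGroup F2] [AddCommGroup F3]
    (hF1 : Module.Free ℤ F1) (hF2 : Module.Free ℤ F2) (hF3 : Module.Free ℤ F3)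
    (ε : G1 →+ G2) (γ : G2 →+ G3) (ε' : F1 →+ F2) (γ' : F2 →+ F3) (δ : F3 →+ G1)
    (hexG2 : Function.Exact ⇑ε ⇑γ)
    (hexG3 : Function.Exact ⇑γ (fun _ : G3 => (0 : F1)))
    (hexF1 : Function.Exact (fun _ : G3 => (0 : F1)) ⇑ε')
    (hexF2 : Function.Exact ⇑ε' ⇑γ')
    (hexF3 : Function.Exact ⇑γ' ⇑δ)
    (hexG1 : Function.Exact ⇑δ ⇑ε)
    {A : I → I' → ℤ} {B : J → J' → ℤ} (hA : RowFinite A) (hB : RowFinite B)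
    (α1 : ((I' →₀ ℤ) ⧸ LinearMap.range (matHom hA)) ≃+ G1)
    (β1 : ↥(LinearMap.ker (matHom hA)) ≃+ F1)
    (α3 : ((J' →₀ ℤ) ⧸ LinearMap.range (matHom hB)) ≃+ G3)
    (β3 : ↥(LinearMap.ker (matHom hB)) ≃+ F3)
    -- `A' ∈ M_{I'×I}(ℤ)` row-finite with `A'A − 1` entrywise nonnegative:
    (A' : I' → I → ℤ) (hA' : RowFinite A')
    (hpos : ∀ a b : I',
      0 ≤ (∑ i ∈ (hA' a).toFinset, A' a i * A i b) - (if a = b then 1 else 0))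
    -- a further given row-finite matrix `Z ∈ M_{J×I'}(ℤ)`:
    (Z : J → I' → ℤ) (hZ : RowFinite Z) :
    -- `Y` can be chosen entrywise nonnegative:
    (∃ (Y : J → I' → ℤ) (hY : RowFinite Y), (∀ j i', 0 ≤ Y j i') ∧
      RealizesSixTerm ε γ ε' γ' δ hA hB α1 β1 α3 β3 Y hY) ∧
    -- and `Y` can be chosen with `Y − Z` entrywise nonnegative:
    (∃ (Y : J → I' → ℤ) (hY : RowFinite Y), (∀ j i', 0 ≤ Y j i' - Z j i') ∧
      RealizesSixTerm ε γ ε' γ' δ hA hB α1 β1 α3 β3 Y hY) := by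
  have realize {Z₀ : J → I' → ℤ} (hZ₀ : RowFinite Z₀) := six_term_realization_nonneg_general
    hA hB α1 β1 α3 β3 hexG2 hexG3 hexF1 hexF2 hexF3 hexG1 hA' hpos hZ₀
  exact ⟨realize (Z₀ := 0) (by simp [RowFinite]), by simpa only [sub_nonneg] using realize hZ⟩
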